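/- The open set condition fails for {S_i}_{i=1}^m if and only if there exists a vertex v ∈ Λ and a finite directed path in the graph G starting at v and ending at the vertex (0,0) (i.e., Relation.ReflTransGen applied to the edge relation of G relates v to (0,0)). -/

import Mathlib

open Polynomial Filter

noncomputable section

namespace PVOSC

variable {m : ℕ}

/-- `λ⁻¹` is a Pisot (P.V.) number: an algebraic integer `> 1` all of whose
Galois conjugates other than itself have complex absolute value `< 1`. -/
def IsPisot (θ : ℝ) : Prop :=
  1 < θ ∧ IsIntegral ℤ θ ∧
    ∀ z : ℂ, aeval z (minpoly ℤ θ) = 0 → z ≠ (θ : ℂ) → ‖z‖ < 1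

/-- `p_σ` for a finite word `σ`. -/
def wordP (p : Fin m → ℕ) (σ : List (Fin m)) : ℕ := (σ.map p).sum

/-- The contracting similitude `S_i(x) = λ^{p_i} x + b_i`. -/
def Smap (lam : ℝ) (p : Fin m → ℕ) (b : Fin m → ℝ) (i : Fin m) : ℝ → ℝ :=
  fun x => lam ^ p i * x + b i

/-- `S_σ = S_{i₁} ∘ ⋯ ∘ S_{i_k}` for `σ = i₁ ⋯ i_k`. -/
def SW (lam : ℝ) (p : Fin m → ℕ) (b : Fin m → ℝ) (σ : List (Fin m)) : ℝ → ℝ :=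
  σ.foldr (fun i f => Smap lam p b i ∘ f) id

/-- `b_σ`, the translation part of `S_σ`. -/
def wordB (lam : ℝ) (p : Fin m → ℕ) (b : Fin m → ℝ) (σ : List (Fin m)) : ℝ :=
  SW lam p b σ 0

/-- `B = {0, b₁, …, b_m}`. -/
def Bset (b : Fin m → ℝ) : Set ℝ := insert 0 (Set.range b)

/-- `B − B`. -/
def BB (b : Fin m → ℝ) : Set ℝ := {x | ∃ u ∈ Bset b, ∃ v ∈ Bset b, x = u - v}

/-- `max_i |b_i|`. -/
def bmax (b : Fin m → ℝ) : ℝ := ⨆ i, |b i|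

/-- The set `𝒞`. -/
def Cset (lam : ℝ) (b : Fin m → ℝ) (T : ℕ) : Set ℝ :=
  {x | |x| ≤ (1 + lam ^ (1 - (T : ℤ))) * bmax b / (1 - lam) ∧
    ∃ R : ℝ[X], (∀ n, R.coeff n ∈ BB b) ∧ lam ^ (2 - (T : ℤ)) * x = R.eval lam⁻¹}

/-- The vertex set `Ξ = {n ∈ ℤ : |n| ≤ T−1} × 𝒞`. -/
def Xi (lam : ℝ) (b : Fin m → ℝ) (T : ℕ) : Set (ℤ × ℝ) :=
  {v | |v.1| ≤ (T : ℤ) - 1 ∧ v.2 ∈ Cset lam b T}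

/-- The open set condition. -/
def OSC (lam : ℝ) (p : Fin m → ℕ) (b : Fin m → ℝ) : Prop :=
  ∃ U : Set ℝ, U.Nonempty ∧ IsOpen U ∧ (⋃ i, Smap lam p b i '' U) ⊆ U ∧
    ∀ i j : Fin m, i ≠ j → Smap lam p b i '' U ∩ Smap lam p b j '' U = ∅

/-- The strong separation condition for the attractor `E`. -/
def SSC (lam : ℝ) (p : Fin m → ℕ) (b : Fin m → ℝ) (E : Set ℝ) : Prop :=
  ∀ i j : Fin m, i ≠ j → Smap lam p b i '' E ∩ Smap lam p b j '' E = ∅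

/-- Group law on `ℤ × ℝ`: `(p₁,c₁)·(p₂,c₂) = (p₁+p₂, λ^{p₁} c₂ + c₁)`. -/
def gmul (lam : ℝ) (u v : ℤ × ℝ) : ℤ × ℝ := (u.1 + v.1, lam ^ u.1 * v.2 + u.2)

/-- Inverse for the group law: `(p,c)⁻¹ = (−p, −λ^{−p} c)`. -/
def ginv (lam : ℝ) (u : ℤ × ℝ) : ℤ × ℝ := (-u.1, -(lam ^ (-u.1) * u.2))

/-- The group element `(p_σ, b_σ)` associated to a finite word `σ`. -/
def elem (lam : ℝ) (p : Fin m → ℕ) (b : Fin m → ℝ) (σ : List (Fin m)) : ℤ × ℝ :=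
  ((wordP p σ : ℤ), wordB lam p b σ)

/-- The sequence `(q_k, c_k)` with the recursive structure w.r.t. `({α_k}, {β_k})`:
`recSeq … k = (q_{k+1}, c_{k+1})`, i.e. index `k` corresponds to `(q_{k+1}, c_{k+1})`. -/
def recSeq (lam : ℝ) (p : Fin m → ℕ) (b : Fin m → ℝ) (α β : ℕ → List (Fin m)) : ℕ → ℤ × ℝ
  | 0 => gmul lam (ginv lam (elem lam p b (β 0))) (elem lam p b (α 0))
  | (k+1) => gmul lam (ginv lam (elem lam p b (β (k+1))))
      (gmul lam (recSeq lam p b α β k) (elem lam p b (α (k+1))))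

/-- The edge relation of the directed graph `G` on `Ξ`. -/
def edge (lam : ℝ) (p : Fin m → ℕ) (b : Fin m → ℝ) (T : ℕ) (u v : ℤ × ℝ) : Prop :=
  u ∈ Xi lam b T ∧ v ∈ Xi lam b T ∧
    ∃ α β : List (Fin m), 1 ≤ wordP p α ∧ wordP p α ≤ 2 * T - 1 ∧
      1 ≤ wordP p β ∧ wordP p β ≤ 2 * T - 1 ∧
      v.1 = (wordP p α : ℤ) + u.1 - (wordP p β : ℤ) ∧
      v.2 = lam ^ (-(wordP p β : ℤ)) * u.2 + lam ^ (u.1 - (wordP p β : ℤ)) * wordB lam p b α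
        - lam ^ (-(wordP p β : ℤ)) * wordB lam p b β

/-- `Λ = Ξ ∩ {(p_j − p_i, λ^{−p_i}(b_j − b_i)) : i ≠ j}`. -/
def Lam (lam : ℝ) (p : Fin m → ℕ) (b : Fin m → ℝ) (T : ℕ) : Set (ℤ × ℝ) :=
  Xi lam b T ∩ {v | ∃ i j : Fin m, i ≠ j ∧
    v = ((p j : ℤ) - (p i : ℤ), lam ^ (-(p i : ℤ)) * (b j - b i))}

/-- The length-`k` prefix of an infinite word `ω`. -/
def prefixList (ω : ℕ → Fin m) (k : ℕ) : List (Fin m) := (List.range k).map ω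

/-!
The pairs `(q, c)` form the group of similitudes `x ↦ λ^q x + c`, and a vertex reached from `Λ`
records the neighbour map `S_I⁻¹ ∘ S_J` of two words starting with different letters. An edge
lengthens `I` and `J`, so a path to `(0, 0)` is an exact overlap `S_I = S_J`; conversely an exact
overlap can be read off in steps so balanced that every intermediate neighbour map stays in `Ξ`.

An exact overlap contradicts the open set condition. If there is none, Garsia's lemma for Pisot
numbers leaves only finitely many neighbour maps of a given size, so some word `I₀` has a maximal
set of neighbours, and prepending letters to `I₀` creates no new ones. The images
`S_{K I₀}(-r, r)` then make up an open set witnessing the condition: if two of its pieces met under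
different first letters, the neighbour map involved would already be one of `I₀`, which forces an
exact overlap.
-/

/-! ### Garsia's lemma -/

theorem norm_eval_le_of_norm_coeff_le {A : Type*} [NormedRing A] [NormOneClass A] {P : A[X]}
    {D : ℝ} (hP : ∀ n, ‖P.coeff n‖ ≤ D) {z : A} (hz : ‖z‖ < 1) :
    ‖P.eval z‖ ≤ D / (1 - ‖z‖) := by
  have hD : 0 ≤ D := (norm_nonneg _).trans (hP 0)
  rw [eval_eq_sum_range]
  calc ‖∑ i ∈ Finset.range (P.natDegree + 1), P.coeff i * z ^ i‖
      ≤ ∑ i ∈ Finset.range (P.natDegree + 1), D * ‖z‖ ^ i :=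
        norm_sum_le_of_le _ fun i _ => (norm_mul_le _ _).trans <|
          mul_le_mul (hP i) (norm_pow_le _ _) (norm_nonneg _) hD
    _ = D * ∑ i ∈ Finset.range (P.natDegree + 1), ‖z‖ ^ i := by rw [Finset.mul_sum]
    _ ≤ D * (1 - ‖z‖)⁻¹ := by
        rw [← tsum_geometric_of_lt_one (norm_nonneg z) hz]
        gcongr
        exact (summable_geometric_of_lt_one (norm_nonneg z) hz).sum_le_tsum _
          fun i _ => by positivity
    _ = D / (1 - ‖z‖) := (div_eq_mul_inv _ _).symm

theorem finite_setOf_aeval_of_norm_conj_le {F : Type*} [Field F] [CharZero F] {θ : F}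
    (hθ : IsIntegral ℤ θ) (M : ℝ) :
    {x : F | ∃ R : ℤ[X], (∀ z : ℂ, aeval z (minpoly ℤ θ) = 0 → ‖aeval z R‖ ≤ M) ∧
      aeval θ R = x}.Finite := by
  let K := IntermediateField.adjoin ℚ {θ}
  have : FiniteDimensional ℚ K := IntermediateField.adjoin.finiteDimensional hθ.tower_top
  have : NumberField K := ⟨⟩
  let g : K := IntermediateField.AdjoinSimple.gen ℚ θ
  have hg : algebraMap K F g = θ := IntermediateField.AdjoinSimple.algebraMap_gen ℚ θ
  have hinj : Function.Injective (algebraMap K F) := (algebraMap K F).injective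
  have hgR (R : ℤ[X]) : algebraMap K F (aeval g R) = aeval θ R := by
    rw [← hg, aeval_algebraMap_apply]
  have hgint : IsIntegral ℤ g := (isIntegral_algebraMap_iff hinj).1 (hg ▸ hθ)
  have hgmin : aeval g (minpoly ℤ θ) = 0 := hinj <| by rw [hgR, minpoly.aeval, map_zero]
  refine ((NumberField.Embeddings.finite_of_norm_le K ℂ M).image (algebraMap K F)).subset ?_
  rintro _ ⟨R, hR, rfl⟩
  refine ⟨aeval g R, ⟨?_, fun φ => ?_⟩, hgR R⟩
  · exact adjoin_le_integralClosure hgint (aeval_mem_adjoin_singleton ℤ g)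
  · have hφ (Q : ℤ[X]) : φ (aeval g Q) = aeval (φ g) Q :=
      (aeval_algHom_apply φ.toIntAlgHom g Q).symm
    rw [hφ]
    exact hR _ (by rw [← hφ, hgmin, map_zero])

theorem IsPisot.finite_setOf_abs_aeval_le {θ : ℝ} (hθ : IsPisot θ) (M D : ℝ) :
    {x : ℝ | |x| ≤ M ∧ ∃ R : ℤ[X], (∀ n, |(R.coeff n : ℝ)| ≤ D) ∧ aeval θ R = x}.Finite := by
  obtain ⟨-, hint, hconj⟩ := hθ
  obtain ⟨C, hC⟩ := (((minpoly ℤ θ).rootSet_finite ℂ).image fun z => D / (1 - ‖z‖)).bddAbove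
  refine (finite_setOf_aeval_of_norm_conj_le hint (max M C)).subset ?_
  rintro _ ⟨hM, R, hR, rfl⟩
  refine ⟨R, fun z hz => ?_, rfl⟩
  by_cases hzθ : z = θ
  · have hreal : aeval (θ : ℂ) R = ((aeval θ R : ℝ) : ℂ) := aeval_algebraMap_apply ℂ θ R
    rw [hzθ, hreal, Complex.norm_real]
    exact le_max_of_le_left hM
  · have hroot : z ∈ (minpoly ℤ θ).rootSet ℂ :=
      mem_rootSet.2 ⟨(minpoly.monic hint).ne_zero, hz⟩
    rw [← eval_map_algebraMap]
    refine le_max_of_le_right <| (norm_eval_le_of_norm_coeff_le (D := D) (fun n => ?_)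
      (hconj z hz hzθ)).trans (hC ⟨z, hroot, rfl⟩)
    simpa [coeff_map] using hR n

section

variable {lam : ℝ} {p : Fin m → ℕ} {b : Fin m → ℝ} {T : ℕ}

theorem abs_le_bmax (b : Fin m → ℝ) (i : Fin m) : |b i| ≤ bmax b :=
  le_ciSup (f := fun i => |b i|) (Set.finite_range _).bddAbove i

theorem bmax_nonneg (b : Fin m → ℝ) : 0 ≤ bmax b := Real.iSup_nonneg fun _ => abs_nonneg _

theorem abs_le_bmax_of_mem_Bset {u : ℝ} (hu : u ∈ Bset b) : |u| ≤ bmax b := by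
  rcases hu with rfl | ⟨i, rfl⟩
  · simpa using bmax_nonneg b
  · exact abs_le_bmax b i

theorem abs_le_two_mul_bmax_of_mem_BB {u : ℝ} (hu : u ∈ BB b) : |u| ≤ 2 * bmax b := by
  obtain ⟨v, hv, w, hw, rfl⟩ := hu
  linarith [abs_sub v w, abs_le_bmax_of_mem_Bset hv, abs_le_bmax_of_mem_Bset hw]

theorem exists_intCast_eq_of_mem_BB (hbZ : ∀ i, ∃ z : ℤ, b i = z) {u : ℝ} (hu : u ∈ BB b) :
    ∃ z : ℤ, (z : ℝ) = u := by
  have hB : ∀ v ∈ Bset b, ∃ z : ℤ, (z : ℝ) = v := by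
    rintro v (rfl | ⟨i, rfl⟩)
    · exact ⟨0, Int.cast_zero⟩
    · exact (hbZ i).imp fun _ => Eq.symm
  obtain ⟨v, hv, w, hw, rfl⟩ := hu
  obtain ⟨y, rfl⟩ := hB v hv
  obtain ⟨z, rfl⟩ := hB w hw
  exact ⟨y - z, Int.cast_sub y z⟩

/-- The values `R(λ⁻¹)` of polynomials `R` with coefficients in `B − B`: up to the factor
`λ^(2 - T)`, the arithmetic condition in the definition of `𝒞`. -/
def polyValues (lam : ℝ) (b : Fin m → ℝ) : Set ℝ :=
  {y | ∃ R : ℝ[X], (∀ n, R.coeff n ∈ BB b) ∧ y = R.eval lam⁻¹}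

theorem IsPisot.finite_setOf_mem_polyValues (hPisot : IsPisot lam⁻¹)
    (hbZ : ∀ i, ∃ z : ℤ, b i = z) (M : ℝ) : {y ∈ polyValues lam b | |y| ≤ M}.Finite := by
  refine (hPisot.finite_setOf_abs_aeval_le M (2 * bmax b)).subset ?_
  rintro _ ⟨⟨R, hR, rfl⟩, hM⟩
  have hlift : R ∈ lifts (algebraMap ℤ ℝ) :=
    (lifts_iff_coeff_lifts R).2 fun n => exists_intCast_eq_of_mem_BB hbZ (hR n)
  obtain ⟨Q, rfl⟩ := (mem_lifts R).1 hlift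
  refine ⟨hM, Q, fun n => ?_, (eval_map_algebraMap Q lam⁻¹).symm⟩
  simpa [coeff_map] using abs_le_two_mul_bmax_of_mem_BB (hR n)

/-! ### Words -/

theorem wordP_cons (i : Fin m) (σ : List (Fin m)) : wordP p (i :: σ) = p i + wordP p σ := by
  simp [wordP]

theorem wordP_append (σ τ : List (Fin m)) : wordP p (σ ++ τ) = wordP p σ + wordP p τ := by
  simp [wordP]

theorem wordP_pos (hp : ∀ i, 1 ≤ p i) {σ : List (Fin m)} (hσ : σ ≠ []) : 1 ≤ wordP p σ := by
  obtain ⟨i, τ, rfl⟩ := List.exists_cons_of_ne_nil hσ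
  exact (hp i).trans (by rw [wordP_cons]; omega)

theorem exists_prefix_wordP_mem_Ico (hT : 1 ≤ T) (hpT : ∀ i, p i ≤ T) {σ : List (Fin m)} {q : ℕ}
    (hq : q ≤ wordP p σ) : ∃ σ₁ σ₂, σ = σ₁ ++ σ₂ ∧ q ≤ wordP p σ₁ ∧ wordP p σ₁ < q + T := by
  have hnil : wordP p [] = 0 := rfl
  induction σ generalizing q with
  | nil => exact ⟨[], [], rfl, hq, by omega⟩
  | cons i σ ih =>
    rcases Nat.eq_zero_or_pos q with rfl | hq0
    · exact ⟨[], i :: σ, rfl, Nat.zero_le _, by omega⟩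
    · rw [wordP_cons] at hq
      have hi := hpT i
      rcases le_total q (p i) with hqi | hqi
      · have hwi : wordP p [i] = p i := by simp [wordP]
        exact ⟨[i], σ, rfl, by omega, by omega⟩
      · obtain ⟨σ₁, σ₂, rfl, hle, hlt⟩ := ih (q := q - p i) (by omega)
        exact ⟨i :: σ₁, σ₂, rfl, by rw [wordP_cons]; omega, by rw [wordP_cons]; omega⟩

theorem SW_cons (i : Fin m) (σ : List (Fin m)) (x : ℝ) :
    SW lam p b (i :: σ) x = lam ^ p i * SW lam p b σ x + b i := rfl

theorem SW_append (σ τ : List (Fin m)) (x : ℝ) :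
    SW lam p b (σ ++ τ) x = SW lam p b σ (SW lam p b τ x) := by
  induction σ with
  | nil => rfl
  | cons i σ ih => rw [List.cons_append, SW_cons, SW_cons, ih]

theorem SW_apply (σ : List (Fin m)) (x : ℝ) :
    SW lam p b σ x = lam ^ wordP p σ * x + wordB lam p b σ := by
  induction σ with
  | nil => simp [SW, wordB, wordP]
  | cons i σ ih =>
    rw [wordB, SW_cons, SW_cons, ih, wordP_cons, pow_add, wordB]
    ring

theorem isOpenMap_SW (h0 : lam ≠ 0) (σ : List (Fin m)) : IsOpenMap (SW lam p b σ) := by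
  have hSW : SW lam p b σ = (· + wordB lam p b σ) ∘ (lam ^ wordP p σ * ·) :=
    funext (SW_apply σ)
  rw [hSW]
  exact (isOpenMap_add_right _).comp (Homeomorph.mulLeft₀ _ (pow_ne_zero _ h0)).isOpenMap

theorem abs_SW_le (h0 : 0 < lam) (h1 : lam < 1) (hp : ∀ i, 1 ≤ p i) {r : ℝ}
    (hr : bmax b / (1 - lam) ≤ r) (σ : List (Fin m)) {x : ℝ} (hx : |x| ≤ r) :
    |SW lam p b σ x| ≤ r := by
  have hbr : bmax b ≤ r * (1 - lam) := (div_le_iff₀ (sub_pos.2 h1)).1 hr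
  induction σ with
  | nil => exact hx
  | cons i σ ih =>
    have hpow : lam ^ p i ≤ lam := pow_le_of_le_one h0.le h1.le (by have := hp i; omega)
    have hbi := abs_le_bmax b i
    calc |lam ^ p i * SW lam p b σ x + b i|
        ≤ |lam ^ p i * SW lam p b σ x| + |b i| := abs_add_le _ _
      _ = lam ^ p i * |SW lam p b σ x| + |b i| := by rw [abs_mul, abs_of_pos (pow_pos h0 _)]
      _ ≤ lam * r + bmax b := by gcongr
      _ ≤ r := by linarith

theorem abs_wordB_le (h0 : 0 < lam) (h1 : lam < 1) (hp : ∀ i, 1 ≤ p i) (σ : List (Fin m)) :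
    |wordB lam p b σ| ≤ bmax b / (1 - lam) :=
  abs_SW_le h0 h1 hp le_rfl σ <| by
    rw [abs_zero]; exact div_nonneg (bmax_nonneg b) (sub_pos.2 h1).le

theorem exists_polynomial_of_wordP_le (h0 : lam ≠ 0) (hp : ∀ i, 1 ≤ p i) {σ : List (Fin m)}
    {N : ℕ} (hN : wordP p σ ≤ N) :
    ∃ R : ℝ[X], (∀ n, R.coeff n ∈ Bset b) ∧ (∀ n, N ≤ n → R.coeff n = 0) ∧
      lam * wordB lam p b σ = lam ^ N * R.eval lam⁻¹ := by
  induction σ generalizing N with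
  | nil => exact ⟨0, by simp [Bset], by simp, by simp [wordB, SW]⟩
  | cons i σ ih =>
    rw [wordP_cons] at hN
    have hpi := hp i
    obtain ⟨k, rfl⟩ := Nat.exists_eq_add_of_le ((Nat.le_add_right _ _).trans hN)
    obtain ⟨R, hRB, hRdeg, hReval⟩ := ih (N := k) (by omega)
    refine ⟨R + monomial (p i + k - 1) (b i), fun n => ?_, fun n hn => ?_, ?_⟩
    · rw [coeff_add, coeff_monomial]
      split_ifs with h
      · rw [hRdeg n (by omega), zero_add]
        exact Or.inr ⟨i, rfl⟩
      · rw [add_zero]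
        exact hRB n
    · rw [coeff_add, coeff_monomial, hRdeg n (by omega), if_neg (by omega), zero_add]
    · have hmonomial : lam ^ (p i + k) * (b i * lam⁻¹ ^ (p i + k - 1)) = lam * b i := by
        obtain ⟨l, hl⟩ := Nat.exists_eq_add_of_le' (show 1 ≤ p i + k by omega)
        rw [hl, Nat.add_sub_cancel, inv_pow, pow_succ]
        field_simp
      rw [eval_add, eval_monomial, mul_add, hmonomial, pow_add, mul_assoc, ← hReval, wordB,
        SW_cons, wordB]
      ring

/-! ### Neighbour maps -/

theorem gmul_assoc (h0 : lam ≠ 0) (u v w : ℤ × ℝ) :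
    gmul lam (gmul lam u v) w = gmul lam u (gmul lam v w) := by
  simp only [gmul, zpow_add₀ h0, Prod.mk.injEq]
  constructor <;> ring

theorem gmul_one (u : ℤ × ℝ) : gmul lam u (0, 0) = u := by simp [gmul]

theorem one_gmul (u : ℤ × ℝ) : gmul lam (0, 0) u = u := by simp [gmul]

theorem ginv_gmul_self (u : ℤ × ℝ) : gmul lam (ginv lam u) u = (0, 0) := by simp [gmul, ginv]

theorem gmul_ginv_self (h0 : lam ≠ 0) (u : ℤ × ℝ) : gmul lam u (ginv lam u) = (0, 0) := by
  simp [gmul, ginv, zpow_ne_zero _ h0]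

theorem ginv_gmul_cancel_left (h0 : lam ≠ 0) (u v : ℤ × ℝ) :
    gmul lam (ginv lam u) (gmul lam u v) = v := by
  rw [← gmul_assoc h0, ginv_gmul_self, one_gmul]

theorem gmul_ginv_cancel_left (h0 : lam ≠ 0) (u v : ℤ × ℝ) :
    gmul lam u (gmul lam (ginv lam u) v) = v := by
  rw [← gmul_assoc h0, gmul_ginv_self h0, one_gmul]

theorem ginv_gmul (h0 : lam ≠ 0) (u v : ℤ × ℝ) :
    ginv lam (gmul lam u v) = gmul lam (ginv lam v) (ginv lam u) := by
  simp only [gmul, ginv, neg_add, zpow_add₀ h0, zpow_neg, Prod.mk.injEq]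
  have := zpow_ne_zero u.1 h0
  constructor
  · ring
  · field_simp
    ring

theorem elem_append (σ τ : List (Fin m)) :
    elem lam p b (σ ++ τ) = gmul lam (elem lam p b σ) (elem lam p b τ) := by
  simp only [elem, gmul, wordP_append, Nat.cast_add, zpow_natCast, ← SW_apply, Prod.mk.injEq]
  exact ⟨trivial, SW_append σ τ 0⟩

theorem SW_eq_of_elem_eq {σ τ : List (Fin m)} (h : elem lam p b σ = elem lam p b τ) :
    SW lam p b σ = SW lam p b τ := by
  simp only [elem, Prod.mk.injEq, Nat.cast_inj] at h
  funext x
  rw [SW_apply, SW_apply, h.1, h.2]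

/-- The neighbour map `S_I⁻¹ ∘ S_J` of the words `I` and `J`, as an element `(q, c)` of the group
of similitudes `x ↦ λ^q x + c`. -/
def neighborMap (lam : ℝ) (p : Fin m → ℕ) (b : Fin m → ℝ) (I J : List (Fin m)) : ℤ × ℝ :=
  gmul lam (ginv lam (elem lam p b I)) (elem lam p b J)

theorem neighborMap_fst (I J : List (Fin m)) :
    (neighborMap lam p b I J).1 = (wordP p J : ℤ) - wordP p I := by
  simp only [neighborMap, gmul, ginv, elem]
  ring

theorem neighborMap_snd (I J : List (Fin m)) : (neighborMap lam p b I J).2 =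
    lam ^ (-(wordP p I : ℤ)) * (wordB lam p b J - wordB lam p b I) := by
  simp only [neighborMap, gmul, ginv, elem]
  ring

theorem neighborMap_singleton (i j : Fin m) : neighborMap lam p b [i] [j] =
    ((p j : ℤ) - (p i : ℤ), lam ^ (-(p i : ℤ)) * (b j - b i)) := by
  refine Prod.ext (neighborMap_fst _ _ |>.trans ?_) (neighborMap_snd _ _ |>.trans ?_) <;>
    simp [wordP, wordB, SW, Smap]

theorem neighborMap_eq_one_iff (h0 : lam ≠ 0) {I J : List (Fin m)} :
    neighborMap lam p b I J = (0, 0) ↔ elem lam p b I = elem lam p b J := by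
  refine ⟨fun h => ?_, fun h => by rw [neighborMap, h, ginv_gmul_self]⟩
  rw [← gmul_ginv_cancel_left h0 (elem lam p b I) (elem lam p b J), ← neighborMap, h, gmul_one]

theorem neighborMap_append (h0 : lam ≠ 0) (I J β α : List (Fin m)) :
    neighborMap lam p b (I ++ β) (J ++ α) = gmul lam (ginv lam (elem lam p b β))
      (gmul lam (neighborMap lam p b I J) (elem lam p b α)) := by
  simp only [neighborMap, elem_append, ginv_gmul h0, gmul_assoc h0]

theorem neighborMap_append_left_cancel (h0 : lam ≠ 0) (K I J : List (Fin m)) :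
    neighborMap lam p b (K ++ I) (K ++ J) = neighborMap lam p b I J := by
  simp only [neighborMap, elem_append, ginv_gmul h0, gmul_assoc h0, ginv_gmul_cancel_left h0]

theorem elem_eq_of_neighborMap_eq (h0 : lam ≠ 0) {I J J' : List (Fin m)}
    (h : neighborMap lam p b I J = neighborMap lam p b I J') :
    elem lam p b J = elem lam p b J' := by
  rw [← gmul_ginv_cancel_left h0 (elem lam p b I) (elem lam p b J), ← neighborMap, h, neighborMap,
    gmul_ginv_cancel_left h0]

theorem neighborMap_snd_of_SW_eq (h0 : lam ≠ 0) {I J : List (Fin m)} {x y : ℝ}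
    (h : SW lam p b I y = SW lam p b J x) :
    (neighborMap lam p b I J).2 = y - lam ^ (neighborMap lam p b I J).1 * x := by
  have hI := pow_ne_zero (wordP p I) h0
  rw [SW_apply, SW_apply] at h
  rw [neighborMap_snd, neighborMap_fst, zpow_sub₀ h0, zpow_neg, zpow_natCast, zpow_natCast]
  field_simp
  linarith

theorem abs_neighborMap_snd_le (h0 : 0 < lam) {I J : List (Fin m)} {x y : ℝ}
    (h : SW lam p b I y = SW lam p b J x) :
    |(neighborMap lam p b I J).2| ≤ |y| + lam ^ (neighborMap lam p b I J).1 * |x| := by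
  rw [neighborMap_snd_of_SW_eq h0.ne' h]
  refine (abs_sub _ _).trans_eq ?_
  rw [abs_mul, abs_of_pos (zpow_pos h0 _)]

theorem neighborMap_snd_mem_polyValues (h0 : lam ≠ 0) (hp : ∀ i, 1 ≤ p i) (hT : 1 ≤ T)
    {I J : List (Fin m)} (hq : (neighborMap lam p b I J).1 ≤ (T : ℤ) - 1) :
    lam ^ (2 - (T : ℤ)) * (neighborMap lam p b I J).2 ∈ polyValues lam b := by
  rw [neighborMap_fst] at hq
  obtain ⟨N, hN⟩ : ∃ N, N + 1 = wordP p I + T := ⟨wordP p I + T - 1, by omega⟩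
  obtain ⟨P, hPB, -, hP⟩ :=
    exists_polynomial_of_wordP_le (b := b) h0 hp (show wordP p J ≤ N by omega)
  obtain ⟨Q, hQB, -, hQ⟩ :=
    exists_polynomial_of_wordP_le (b := b) h0 hp (show wordP p I ≤ N by omega)
  refine ⟨P - Q, fun n => ⟨_, hPB n, _, hQB n, coeff_sub P Q n⟩, ?_⟩
  have hexp : lam ^ (2 - (T : ℤ)) * lam ^ (-(wordP p I : ℤ)) = lam * (lam ^ N)⁻¹ := by
    rw [← zpow_add₀ h0, ← zpow_natCast, ← zpow_neg, ← zpow_one_add₀ h0]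
    congr 1
    omega
  calc lam ^ (2 - (T : ℤ)) * (neighborMap lam p b I J).2
      = (lam ^ N)⁻¹ * (lam * wordB lam p b J - lam * wordB lam p b I) := by
        rw [neighborMap_snd, ← mul_assoc, hexp]
        ring
    _ = (P - Q).eval lam⁻¹ := by
        rw [hP, hQ, ← mul_sub, inv_mul_cancel_left₀ (pow_ne_zero N h0), eval_sub]

/-! ### Exact overlaps and paths -/

/-- Exact overlap: `S_I = S_J` for two words `I`, `J` with different first letters. Equality of
the maps is expressed by equality of the group elements `(p_I, b_I)` and `(p_J, b_J)`. -/
def HasExactOverlap (lam : ℝ) (p : Fin m → ℕ) (b : Fin m → ℝ) : Prop :=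
  ∃ i j : Fin m, i ≠ j ∧ ∃ σ τ : List (Fin m), elem lam p b (i :: σ) = elem lam p b (j :: τ)

theorem edge_iff (h0 : lam ≠ 0) {u v : ℤ × ℝ} :
    edge lam p b T u v ↔ u ∈ Xi lam b T ∧ v ∈ Xi lam b T ∧
    ∃ α β : List (Fin m), wordP p α ∈ Set.Icc 1 (2 * T - 1) ∧ wordP p β ∈ Set.Icc 1 (2 * T - 1) ∧
      v = gmul lam (ginv lam (elem lam p b β)) (gmul lam u (elem lam p b α)) := by
  simp only [edge, gmul, ginv, elem, Prod.ext_iff, Set.mem_Icc, zpow_sub₀ h0, zpow_neg,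
    and_assoc]
  refine and_congr_right' <| and_congr_right' <| exists_congr fun α => exists_congr fun β => ?_
  have hfst : (wordP p α : ℤ) + u.1 - wordP p β = -(wordP p β : ℤ) + (u.1 + wordP p α) := by ring
  rw [hfst]
  ring_nf

theorem exists_elem_append_eq_of_path (h0 : lam ≠ 0) {v : ℤ × ℝ}
    (hpath : Relation.ReflTransGen (edge lam p b T) v (0, 0)) :
    ∀ I J, v = neighborMap lam p b I J → ∃ β α, elem lam p b (I ++ β) = elem lam p b (J ++ α) := by
  induction hpath using Relation.ReflTransGen.head_induction_on with
  | refl =>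
    intro I J h
    exact ⟨[], [], by simpa using (neighborMap_eq_one_iff h0).1 h.symm⟩
  | head hedge _ ih =>
    rintro I J rfl
    obtain ⟨-, -, α, β, -, -, rfl⟩ := (edge_iff h0).1 hedge
    obtain ⟨β', α', h⟩ := ih (I ++ β) (J ++ α) (neighborMap_append h0 I J β α).symm
    exact ⟨β ++ β', α ++ α', by simpa using h⟩

theorem neighborMap_mem_Xi (h0 : 0 < lam) (h1 : lam < 1) (hp : ∀ i, 1 ≤ p i)
    {I J β α : List (Fin m)} (h : elem lam p b (I ++ β) = elem lam p b (J ++ α))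
    (hq : |(neighborMap lam p b I J).1| ≤ (T : ℤ) - 1) : neighborMap lam p b I J ∈ Xi lam b T := by
  have hT : 1 ≤ T := by have := (abs_nonneg _).trans hq; omega
  refine ⟨hq, ?_, neighborMap_snd_mem_polyValues h0.ne' hp hT (abs_le.1 hq).2⟩
  have hSW : SW lam p b I (wordB lam p b β) = SW lam p b J (wordB lam p b α) := by
    simpa only [wordB, SW_append] using congrFun (SW_eq_of_elem_eq h) 0
  have hpow : lam ^ (neighborMap lam p b I J).1 ≤ lam ^ (1 - (T : ℤ)) :=
    zpow_le_zpow_right_of_le_one₀ h0 h1.le (by linarith [(abs_le.1 hq).1])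
  have hα := abs_wordB_le (b := b) h0 h1 hp α
  have hβ := abs_wordB_le (b := b) h0 h1 hp β
  calc |(neighborMap lam p b I J).2|
      ≤ |wordB lam p b β| + lam ^ (neighborMap lam p b I J).1 * |wordB lam p b α| :=
        abs_neighborMap_snd_le h0 hSW
    _ ≤ bmax b / (1 - lam) + lam ^ (1 - (T : ℤ)) * (bmax b / (1 - lam)) := by gcongr
    _ = (1 + lam ^ (1 - (T : ℤ))) * bmax b / (1 - lam) := by ring

theorem edge_neighborMap_append (h0 : 0 < lam) (h1 : lam < 1) (hp : ∀ i, 1 ≤ p i)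
    {I J β α β' α' : List (Fin m)}
    (h : elem lam p b (I ++ (β ++ β')) = elem lam p b (J ++ (α ++ α')))
    (hα : wordP p α ∈ Set.Icc 1 (2 * T - 1)) (hβ : wordP p β ∈ Set.Icc 1 (2 * T - 1))
    (hq : |(neighborMap lam p b I J).1| ≤ (T : ℤ) - 1)
    (hq' : |(neighborMap lam p b (I ++ β) (J ++ α)).1| ≤ (T : ℤ) - 1) :
    edge lam p b T (neighborMap lam p b I J) (neighborMap lam p b (I ++ β) (J ++ α)) :=
  (edge_iff h0.ne').2 ⟨neighborMap_mem_Xi h0 h1 hp h hq,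
    neighborMap_mem_Xi h0 h1 hp (by simpa only [List.append_assoc] using h) hq',
    α, β, hα, hβ, neighborMap_append h0.ne' I J β α⟩

-- One letter of the word that is behind, answered by the shortest prefix that overtakes it.
theorem exists_balanced_prefixes_of_nonneg (hp : ∀ i, 1 ≤ p i) (hpT : ∀ i, p i ≤ T) {d : ℤ}
    (hd0 : 0 ≤ d) (hdT : d ≤ (T : ℤ) - 1) {σ τ : List (Fin m)} (hσ : σ ≠ [])
    (h : d + wordP p σ = wordP p τ) :
    ∃ σ₁ σ₂ τ₁ τ₂, σ = σ₁ ++ σ₂ ∧ τ = τ₁ ++ τ₂ ∧ wordP p σ₁ ∈ Set.Icc 1 (2 * T - 1) ∧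
      wordP p τ₁ ∈ Set.Icc 1 (2 * T - 1) ∧ |d + wordP p σ₁ - wordP p τ₁| ≤ (T : ℤ) - 1 := by
  obtain ⟨a, σ₂, rfl⟩ := List.exists_cons_of_ne_nil hσ
  have ha := hp a
  have haT := hpT a
  rw [wordP_cons] at h
  obtain ⟨τ₁, τ₂, rfl, hle, hlt⟩ :=
    exists_prefix_wordP_mem_Ico (ha.trans haT) hpT (σ := τ) (q := d.toNat + 1) (by omega)
  have hwa : wordP p [a] = p a := by simp [wordP]
  refine ⟨[a], σ₂, τ₁, τ₂, rfl, rfl, ?_, ⟨by omega, by omega⟩, abs_le.2 ⟨by omega, by omega⟩⟩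
  exact ⟨by omega, by omega⟩

theorem exists_balanced_prefixes (hp : ∀ i, 1 ≤ p i) (hpT : ∀ i, p i ≤ T) {d : ℤ}
    (hd : |d| ≤ (T : ℤ) - 1) {σ τ : List (Fin m)} (hσ : σ ≠ []) (hτ : τ ≠ [])
    (h : d + wordP p σ = wordP p τ) :
    ∃ σ₁ σ₂ τ₁ τ₂, σ = σ₁ ++ σ₂ ∧ τ = τ₁ ++ τ₂ ∧ wordP p σ₁ ∈ Set.Icc 1 (2 * T - 1) ∧
      wordP p τ₁ ∈ Set.Icc 1 (2 * T - 1) ∧ |d + wordP p σ₁ - wordP p τ₁| ≤ (T : ℤ) - 1 := by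
  obtain ⟨hdl, hdu⟩ := abs_le.1 hd
  rcases le_total 0 d with h0 | h0
  · exact exists_balanced_prefixes_of_nonneg hp hpT h0 hdu hσ h
  · obtain ⟨τ₁, τ₂, σ₁, σ₂, rfl, rfl, hτ₁, hσ₁, habs⟩ :=
      exists_balanced_prefixes_of_nonneg hp hpT (d := -d) (by omega) (by omega) hτ (σ := τ)
        (τ := σ) (by omega)
    refine ⟨σ₁, σ₂, τ₁, τ₂, rfl, rfl, hσ₁, hτ₁, ?_⟩
    rw [← abs_neg]
    convert habs using 2
    ring

-- The extra letter `i` makes both appended words nonempty, as an edge requires.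
theorem edge_neighborMap_one (h0 : 0 < lam) (h1 : lam < 1) (hp : ∀ i, 1 ≤ p i)
    (hpT : ∀ i, p i ≤ T) (i : Fin m) {I J β α : List (Fin m)}
    (h : elem lam p b (I ++ β) = elem lam p b (J ++ α))
    (hα : wordP p α ≤ T - 1) (hβ : wordP p β ≤ T - 1)
    (hq : |(neighborMap lam p b I J).1| ≤ (T : ℤ) - 1) :
    edge lam p b T (neighborMap lam p b I J) (0, 0) := by
  have hi := hp i
  have hiT := hpT i
  have hwi : wordP p [i] = p i := by simp [wordP]
  have h' : elem lam p b (I ++ (β ++ [i])) = elem lam p b (J ++ (α ++ [i])) := by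
    rw [← List.append_assoc, elem_append, h, ← elem_append, List.append_assoc]
  have hone := (neighborMap_eq_one_iff h0.ne').2 h'
  rw [← hone]
  refine edge_neighborMap_append h0 h1 hp (β' := []) (α' := [])
    (by simpa only [List.append_nil] using h') ?_ ?_ hq (by rw [hone]; simpa using hi.trans hiT)
  all_goals
    rw [wordP_append]
    exact ⟨by omega, by omega⟩

theorem path_of_elem_append_eq (h0 : 0 < lam) (h1 : lam < 1) (hp : ∀ i, 1 ≤ p i)
    (hpT : ∀ i, p i ≤ T) (i : Fin m) {I J β α : List (Fin m)}
    (h : elem lam p b (I ++ β) = elem lam p b (J ++ α))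
    (hq : |(neighborMap lam p b I J).1| ≤ (T : ℤ) - 1) :
    Relation.ReflTransGen (edge lam p b T) (neighborMap lam p b I J) (0, 0) := by
  induction hn : wordP p α using Nat.strong_induction_on generalizing I J β α with
  | _ n ih =>
  have hweight : (neighborMap lam p b I J).1 + wordP p α = wordP p β := by
    have hP : (wordP p (I ++ β) : ℤ) = wordP p (J ++ α) := congrArg Prod.fst h
    rw [wordP_append, wordP_append] at hP
    rw [neighborMap_fst]
    omega
  by_cases hshort : wordP p α ≤ T - 1 ∧ wordP p β ≤ T - 1
  · exact .single (edge_neighborMap_one h0 h1 hp hpT i h hshort.1 hshort.2 hq)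
  have hq_bounds := abs_le.1 hq
  have hwnil : wordP p [] = 0 := rfl
  obtain ⟨α₁, α₂, β₁, β₂, rfl, rfl, hα₁, hβ₁, hbal⟩ := exists_balanced_prefixes hp hpT hq
    (σ := α) (τ := β) (by rintro rfl; omega) (by rintro rfl; omega) hweight
  have hq' : |(neighborMap lam p b (I ++ β₁) (J ++ α₁)).1| ≤ (T : ℤ) - 1 := by
    rw [neighborMap_fst] at hbal ⊢
    rw [wordP_append, wordP_append]
    convert hbal using 2
    push_cast
    ring
  refine .head (edge_neighborMap_append h0 h1 hp h hα₁ hβ₁ hq hq') ?_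
  refine ih (wordP p α₂) ?_ (by simpa only [List.append_assoc] using h) hq' rfl
  rw [← hn, wordP_append]
  have := hα₁.1
  omega

theorem hasExactOverlap_iff_exists_path (h0 : 0 < lam) (h1 : lam < 1) (hp : ∀ i, 1 ≤ p i)
    (hpT : ∀ i, p i ≤ T) : HasExactOverlap lam p b ↔
      ∃ v ∈ Lam lam p b T, Relation.ReflTransGen (edge lam p b T) v (0, 0) := by
  constructor
  · rintro ⟨i, j, hij, σ, τ, h⟩
    have hq : |(neighborMap lam p b [i] [j]).1| ≤ (T : ℤ) - 1 := by
      rw [neighborMap_singleton, abs_le]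
      have := hp i; have := hp j; have := hpT i; have := hpT j
      constructor <;> dsimp only <;> omega
    have h' : elem lam p b ([i] ++ σ) = elem lam p b ([j] ++ τ) := h
    exact ⟨_, ⟨neighborMap_mem_Xi h0 h1 hp h' hq, i, j, hij,
      neighborMap_singleton i j⟩, path_of_elem_append_eq h0 h1 hp hpT i h' hq⟩
  · rintro ⟨_, ⟨-, i, j, hij, rfl⟩, hpath⟩
    obtain ⟨σ, τ, h⟩ :=
      exists_elem_append_eq_of_path h0.ne' hpath [i] [j] (neighborMap_singleton i j).symm
    exact ⟨i, j, hij, σ, τ, h⟩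

/-! ### Exact overlaps and the open set condition -/

theorem SW_mem_of_iUnion_image_subset {U : Set ℝ} (hU : (⋃ i, Smap lam p b i '' U) ⊆ U)
    (σ : List (Fin m)) {x : ℝ} (hx : x ∈ U) : SW lam p b σ x ∈ U := by
  induction σ with
  | nil => exact hx
  | cons i σ ih => exact hU (Set.mem_iUnion.2 ⟨i, _, ih, rfl⟩)

theorem HasExactOverlap.not_OSC (h : HasExactOverlap lam p b) : ¬ OSC lam p b := by
  obtain ⟨i, j, hij, σ, τ, h⟩ := h
  rintro ⟨U, ⟨x, hx⟩, -, hU, hdisj⟩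
  refine Set.notMem_empty (SW lam p b (i :: σ) x) (hdisj i j hij ▸ ⟨?_, ?_⟩)
  · exact ⟨_, SW_mem_of_iUnion_image_subset hU σ hx, rfl⟩
  · rw [SW_eq_of_elem_eq h]
    exact ⟨_, SW_mem_of_iUnion_image_subset hU τ hx, rfl⟩

theorem OSC_of_disjoint_SW_image (h0 : lam ≠ 0) {V : Set ℝ} (hV : IsOpen V) (hne : V.Nonempty)
    (hdisj : ∀ i j, i ≠ j → ∀ K L,
      Disjoint (SW lam p b (i :: K) '' V) (SW lam p b (j :: L) '' V)) : OSC lam p b := by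
  have himage (i : Fin m) :
      Smap lam p b i '' ⋃ K, SW lam p b K '' V = ⋃ K, SW lam p b (i :: K) '' V := by
    simp only [Set.image_iUnion, ← Set.image_comp]
    rfl
  refine ⟨⋃ K, SW lam p b K '' V, ?_, isOpen_iUnion fun K => isOpenMap_SW h0 K V hV, ?_, ?_⟩
  · exact hne.mono (Set.subset_iUnion_of_subset [] (Set.image_id V).ge)
  · refine Set.iUnion_subset fun i => (himage i).trans_subset ?_
    exact Set.iUnion_subset fun K => Set.subset_iUnion (fun K => SW lam p b K '' V) (i :: K)
  · intro i j hij
    rw [himage, himage, ← Set.disjoint_iff_inter_eq_empty]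
    simpa only [Set.disjoint_iUnion_left, Set.disjoint_iUnion_right] using
      fun K L => hdisj i j hij L K

/-- The neighbourhood type of the word `I`: the neighbour maps `S_I⁻¹ ∘ S_J` of comparable ratio
(`0 ≤ p_J - p_I < T`) and translation at most `2 r`. Two words of comparable ratio whose images of
`(-r, r)` meet are such neighbours. -/
def neighborType (lam : ℝ) (p : Fin m → ℕ) (b : Fin m → ℝ) (T : ℕ) (r : ℝ) (I : List (Fin m)) :
    Set (ℤ × ℝ) :=
  {u | u.1 ∈ Set.Icc 0 ((T : ℤ) - 1) ∧ |u.2| ≤ 2 * r ∧ ∃ J, neighborMap lam p b I J = u}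

theorem neighborType_subset_append (h0 : lam ≠ 0) {r : ℝ} (K I : List (Fin m)) :
    neighborType lam p b T r I ⊆ neighborType lam p b T r (K ++ I) := by
  rintro u ⟨hq, hc, J, rfl⟩
  exact ⟨hq, hc, K ++ J, neighborMap_append_left_cancel h0 K I J⟩

theorem finite_iUnion_neighborType (hPisot : IsPisot lam⁻¹) (hp : ∀ i, 1 ≤ p i)
    (hbZ : ∀ i, ∃ z : ℤ, b i = z) (hT : 1 ≤ T) (r : ℝ) :
    (⋃ I, neighborType lam p b T r I).Finite := by
  have h0 : 0 < lam := (one_lt_inv_iff₀.1 hPisot.1).1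
  have hscale : 0 < lam ^ (2 - (T : ℤ)) := zpow_pos h0 _
  have hfin := (hPisot.finite_setOf_mem_polyValues hbZ (lam ^ (2 - (T : ℤ)) * (2 * r))).preimage
    (mul_right_injective₀ hscale.ne').injOn
  refine ((Set.finite_Icc (0 : ℤ) ((T : ℤ) - 1)).prod hfin).subset (Set.iUnion_subset fun I => ?_)
  rintro _ ⟨hq, hc, J, rfl⟩
  refine ⟨hq, neighborMap_snd_mem_polyValues h0.ne' hp hT hq.2, ?_⟩
  rw [abs_mul, abs_of_pos hscale]
  gcongr

theorem exists_neighborType_append_eq (h0 : lam ≠ 0) {r : ℝ}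
    (hfin : (⋃ I, neighborType lam p b T r I).Finite) :
    ∃ I₀, ∀ K, neighborType lam p b T r (K ++ I₀) = neighborType lam p b T r I₀ := by
  have hrange : (neighborType lam p b T r '' Set.univ).Finite :=
    hfin.finite_subsets.subset <| by
      rintro _ ⟨I, -, rfl⟩
      exact Set.subset_iUnion _ I
  obtain ⟨I₀, -, hmax⟩ := hrange.exists_maximalFor' _ _ Set.univ_nonempty
  have hsub (K) := neighborType_subset_append (p := p) (b := b) (T := T) (r := r) h0 K I₀
  exact ⟨I₀, fun K => (hmax (Set.mem_univ _) (hsub K)).antisymm (hsub K)⟩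

theorem exists_prefix_neighborMap_mem_neighborType (h0 : 0 < lam) (h1 : lam < 1)
    (hp : ∀ i, 1 ≤ p i) (hT : 1 ≤ T) (hpT : ∀ i, p i ≤ T) {r : ℝ} (hr : bmax b / (1 - lam) ≤ r)
    {I J : List (Fin m)} (hIJ : wordP p I ≤ wordP p J) {x y : ℝ} (hx : |x| ≤ r) (hy : |y| ≤ r)
    (h : SW lam p b I y = SW lam p b J x) :
    ∃ J₁ J₂, J = J₁ ++ J₂ ∧ wordP p I ≤ wordP p J₁ ∧
      neighborMap lam p b I J₁ ∈ neighborType lam p b T r I := by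
  obtain ⟨J₁, J₂, rfl, hle, hlt⟩ := exists_prefix_wordP_mem_Ico hT hpT hIJ
  have hq : (neighborMap lam p b I J₁).1 ∈ Set.Icc 0 ((T : ℤ) - 1) := by
    rw [neighborMap_fst]
    exact ⟨by omega, by omega⟩
  refine ⟨J₁, J₂, rfl, hle, hq, ?_, J₁, rfl⟩
  rw [SW_append] at h
  have hx' : |SW lam p b J₂ x| ≤ r := abs_SW_le h0 h1 hp hr J₂ hx
  calc |(neighborMap lam p b I J₁).2|
      ≤ |y| + lam ^ (neighborMap lam p b I J₁).1 * |SW lam p b J₂ x| :=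
        abs_neighborMap_snd_le h0 h
    _ ≤ r + 1 * r := by
        gcongr
        exact (zpow_le_zpow_right_of_le_one₀ h0 h1.le hq.1).trans_eq (zpow_zero _)
    _ = 2 * r := by ring

theorem hasExactOverlap_of_SW_eq (h0 : 0 < lam) (h1 : lam < 1) (hp : ∀ i, 1 ≤ p i)
    (hpT : ∀ i, p i ≤ T) {r : ℝ} (hr : bmax b / (1 - lam) ≤ r) {I₀ : List (Fin m)}
    (hI₀ : ∀ K, neighborType lam p b T r (K ++ I₀) = neighborType lam p b T r I₀) {i j : Fin m}
    (hij : i ≠ j) {K J : List (Fin m)} (hle : wordP p (i :: K ++ I₀) ≤ wordP p (j :: J))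
    {x y : ℝ} (hx : |x| ≤ r) (hy : |y| ≤ r)
    (h : SW lam p b (i :: K ++ I₀) y = SW lam p b (j :: J) x) : HasExactOverlap lam p b := by
  obtain ⟨J₁, J₂, hJ, hle', hmem⟩ :=
    exists_prefix_neighborMap_mem_neighborType h0 h1 hp ((hp i).trans (hpT i)) hpT hr hle hx hy h
  obtain ⟨j', J₁, rfl⟩ : ∃ j' J', J₁ = j' :: J' := List.exists_cons_of_ne_nil <| by
    rintro rfl
    exact absurd (wordP_pos hp (List.cons_ne_nil i (K ++ I₀))) (by simpa [wordP] using hle')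
  obtain ⟨rfl, -⟩ := List.cons_eq_cons.1 hJ
  rw [hI₀] at hmem
  obtain ⟨-, -, J', hJ'⟩ := hmem
  rw [← neighborMap_append_left_cancel h0.ne' (i :: K)] at hJ'
  exact ⟨i, j, hij, K ++ J', J₁, elem_eq_of_neighborMap_eq h0.ne' hJ'⟩

theorem OSC_of_not_hasExactOverlap (hPisot : IsPisot lam⁻¹) (hp : ∀ i, 1 ≤ p i)
    (hbZ : ∀ i, ∃ z : ℤ, b i = z) (hno : ¬ HasExactOverlap lam p b) : OSC lam p b := by
  obtain ⟨h0, h1⟩ := one_lt_inv_iff₀.1 hPisot.1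
  obtain ⟨T, hT, hpT⟩ : ∃ T, 1 ≤ T ∧ ∀ i, p i ≤ T := ⟨Finset.univ.sup p + 1, by omega,
    fun i => (Finset.le_sup (Finset.mem_univ i)).trans (Nat.le_succ _)⟩
  set r := bmax b / (1 - lam) + 1
  have hr : bmax b / (1 - lam) ≤ r := by linarith
  have hr0 : 0 < r := by linarith [div_nonneg (bmax_nonneg b) (sub_pos.2 h1).le]
  obtain ⟨I₀, hI₀⟩ :=
    exists_neighborType_append_eq h0.ne' (finite_iUnion_neighborType hPisot hp hbZ hT r)
  refine OSC_of_disjoint_SW_image (V := SW lam p b I₀ '' Metric.ball 0 r) h0.ne'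
    (isOpenMap_SW h0.ne' I₀ _ Metric.isOpen_ball) ((Metric.nonempty_ball.2 hr0).image _)
    fun i j hij K L => Set.disjoint_left.2 ?_
  rintro _ ⟨_, ⟨y, hy, rfl⟩, rfl⟩ ⟨_, ⟨x, hx, rfl⟩, heq⟩
  have hy' : |y| ≤ r := (mem_ball_zero_iff.1 hy).le
  have hx' : |x| ≤ r := (mem_ball_zero_iff.1 hx).le
  rw [← SW_append, ← SW_append] at heq
  rcases le_total (wordP p (i :: K ++ I₀)) (wordP p (j :: L ++ I₀)) with hle | hle
  · exact hno (hasExactOverlap_of_SW_eq h0 h1 hp hpT hr hI₀ hij hle hx' hy' heq.symm)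
  · exact hno (hasExactOverlap_of_SW_eq h0 h1 hp hpT hr hI₀ hij.symm hle hy' hx' heq)

theorem not_OSC_iff_hasExactOverlap (hPisot : IsPisot lam⁻¹) (hp : ∀ i, 1 ≤ p i)
    (hbZ : ∀ i, ∃ z : ℤ, b i = z) : ¬ OSC lam p b ↔ HasExactOverlap lam p b :=
  ⟨fun h => by_contra fun hno => h (OSC_of_not_hasExactOverlap hPisot hp hbZ hno),
    HasExactOverlap.not_OSC⟩

end

theorem stmt11 (lam : ℝ) (hlam0 : 0 < lam) (hlam1 : lam < 1)
    (hPisot : IsPisot lam⁻¹)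
    {m : ℕ} (hm : 2 ≤ m) (p : Fin m → ℕ) (hp : ∀ i, 1 ≤ p i)
    (b : Fin m → ℝ) (hbZ : ∀ i, ∃ z : ℤ, b i = (z : ℝ))
    (T : ℕ) (hT : T = Finset.univ.sup p) :
    ¬ OSC lam p b ↔
      ∃ v ∈ Lam lam p b T,
        Relation.ReflTransGen (edge lam p b T) v ((0 : ℤ), (0 : ℝ)) := by
  have hpT : ∀ i, p i ≤ T := fun i => hT ▸ Finset.le_sup (Finset.mem_univ i)
  exact (not_OSC_iff_hasExactOverlap hPisot hp hbZ).trans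
    (hasExactOverlap_iff_exists_path hlam0 hlam1 hp hpT)

end PVOSC
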